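/- arXiv:1610.00518 — 2 statements merged into one kernel-verified Lean document; each statement's English description precedes it below -/
import Mathlib

section
/- Let c ∈ ℝ^s have pairwise distinct entries, let S1, S2 be s×s real matrices with S1 V1 = (I − S2) V0, and let φ : ℝ → ℝ^m be s times continuously differentiable on an interval [a, b] with ‖φ^{(s)}(t)‖ ≤ M on [a, b]. Then there is a constant K, depending only on c, S1, S2, s, such that for all Δt > 0 and all n with all times t_{n−1,j}, t_{n,j} in [a, b], the extrapolation error δ_n with components (δ_n)_i = φ(t_{n,i}) − Σ_{j=1}^s (S1)_{ij} φ(t_{n−1,j}) − Σ_{j=1}^s (S2)_{ij} φ(t_{n,j}) satisfies max_i ‖(δ_n)_i‖ ≤ K M Δt^s. -/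
open Finset

lemma taylor_bd {E : Type*} [NormedAddCommGroup E] [NormedSpace ℝ E] (f : ℝ → E) (a b M : ℝ)
    (n : ℕ) (hab : a < b) (hf : ContDiffOn ℝ ((n + 1 : ℕ) : ℕ∞) f (Set.Icc a b))
    (hM : ∀ t ∈ Set.Icc a b, ‖iteratedDerivWithin (n + 1) f (Set.Icc a b) t‖ ≤ M)
    (x y : ℝ) (hx : x ∈ Set.Icc a b) (hy : y ∈ Set.Icc a b) :
    ‖f y - taylorWithinEval f n (Set.Icc a b) x y‖ ≤ M * |y - x| ^ (n + 1) := by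
  have hM0 : 0 ≤ M := (norm_nonneg _).trans (hM x hx)
  have hsub : Set.uIcc x y ⊆ Set.Icc a b := Set.uIcc_subset_Icc hx hy
  have hf1 : ContDiffOn ℝ n f (Set.Icc a b) := hf.of_le (by norm_cast; omega)
  have hf' : DifferentiableOn ℝ (iteratedDerivWithin n f (Set.Icc a b)) (Set.Icc a b) :=
    hf.differentiableOn_iteratedDerivWithin (mod_cast n.lt_succ_self) (uniqueDiffOn_Icc hab)
  have key := Convex.norm_image_sub_le_of_norm_hasDerivWithin_le (𝕜 := ℝ)
    (f := fun t => taylorWithinEval f n (Set.Icc a b) t y)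
    (f' := fun t => (((n.factorial : ℝ)⁻¹ * (y - t) ^ n) •
      iteratedDerivWithin (n + 1) f (Set.Icc a b) t))
    (s := Set.uIcc x y) (x := x) (y := y) (C := |y - x| ^ n * M)
    (fun t ht => (hasDerivWithinAt_taylorWithinEval_at_Icc y hab (hsub ht) hf1 hf').mono hsub)
    (fun t ht => by
      rw [norm_smul]
      apply mul_le_mul _ (hM t (hsub ht)) (norm_nonneg _) (by positivity)
      rw [norm_mul, norm_inv, norm_pow, Real.norm_eq_abs, Real.norm_eq_abs]
      have h1 : |y - t| ≤ |y - x| := by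
        exact Set.abs_sub_right_of_mem_uIcc ht
      have h2 : |(n.factorial : ℝ)|⁻¹ ≤ 1 := by
        apply inv_le_one_of_one_le₀
        rw [Nat.abs_cast]
        exact_mod_cast Nat.one_le_iff_ne_zero.mpr n.factorial_ne_zero
      calc _ ≤ 1 * |y - x| ^ n := by gcongr
        _ = _ := one_mul _)
    (convex_uIcc x y) Set.left_mem_uIcc Set.right_mem_uIcc
  simp only [taylorWithinEval_self] at key
  refine key.trans (le_of_eq ?_)
  rw [Real.norm_eq_abs]; ring

lemma poly_exact (s : ℕ) (c : Fin s → ℝ)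
    (S1 S2 V0 V1 : Matrix (Fin s) (Fin s) ℝ)
    (hV0 : ∀ i j, V0 i j = c i ^ (j : ℕ))
    (hV1 : ∀ i j, V1 i j = (c i - 1) ^ (j : ℕ))
    (hext : S1 * V1 = (1 - S2) * V0) (i : Fin s) (d : ℝ) (k : ℕ) (hk : k < s) :
    ∑ j, S1 i j * (c j - 1 - d) ^ k + ∑ j, S2 i j * (c j - d) ^ k = (c i - d) ^ k := by
  have hmon : ∀ l < s, ∑ j, S1 i j * (c j - 1) ^ l + ∑ j, S2 i j * c j ^ l = c i ^ l := by
    intro l hl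
    have h := congrFun (congrFun hext i) ⟨l, hl⟩
    rw [sub_mul, one_mul, Matrix.sub_apply, Matrix.mul_apply, Matrix.mul_apply] at h
    simp only [hV0, hV1] at h
    linarith
  simp only [sub_eq_add_neg _ d, add_pow, mul_sum]
  rw [sum_comm, sum_comm (s := univ) (t := range (k+1)), ← sum_add_distrib]
  refine sum_congr rfl fun l hl => ?_
  rw [← hmon l (by simp at hl; omega), add_mul, add_mul, sum_mul, sum_mul, sum_mul, sum_mul]
  congr 1 <;> exact sum_congr rfl fun j _ => by ring


/-- If the extrapolation has stage order `s` (i.e. `S1 V1 = (I - S2) V0`),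
then for any `C^s` function `φ` on `[a,b]` with `‖φ^{(s)}‖ ≤ M` there, the extrapolation
error is bounded by `K M Δt^s`, with `K` depending only on `c, S1, S2, s`. -/
theorem stmt_6 (s : ℕ) (hs : 1 ≤ s)
    (c : Fin s → ℝ) (hc : Function.Injective c)
    (S1 S2 V0 V1 : Matrix (Fin s) (Fin s) ℝ)
    (hV0 : ∀ i j, V0 i j = c i ^ (j : ℕ))
    (hV1 : ∀ i j, V1 i j = (c i - 1) ^ (j : ℕ))
    (hext : S1 * V1 = (1 - S2) * V0) :
    ∃ K : ℝ, ∀ (m : ℕ) (φ : ℝ → EuclideanSpace ℝ (Fin m)) (a b M : ℝ), a < b →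
      ContDiffOn ℝ (s : ℕ∞) φ (Set.Icc a b) →
      (∀ t ∈ Set.Icc a b, ‖iteratedDerivWithin s φ (Set.Icc a b) t‖ ≤ M) →
      ∀ Δt : ℝ, 0 < Δt → ∀ n : ℕ,
        (∀ j : Fin s, ((n : ℝ) * Δt - Δt + c j * Δt) ∈ Set.Icc a b ∧
          ((n : ℝ) * Δt + c j * Δt) ∈ Set.Icc a b) →
        ∀ i : Fin s,
          ‖φ ((n : ℝ) * Δt + c i * Δt)
              - (∑ j, S1 i j • φ ((n : ℝ) * Δt - Δt + c j * Δt))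
              - ∑ j, S2 i j • φ ((n : ℝ) * Δt + c j * Δt)‖ ≤ K * M * Δt ^ s := by
  refine ⟨∑ i, ∑ j, (|S1 i j| * |c j - 1 - c i| ^ s + |S2 i j| * |c j - c i| ^ s), ?_⟩
  intro m φ a b M hab hφ hM Δt hΔ n hmem i
  have hM0 : 0 ≤ M := (norm_nonneg _).trans (hM a ⟨le_rfl, hab.le⟩)
  have hp := poly_exact s c S1 S2 V0 V1 hV0 hV1 hext i (c i)
  set x := (n : ℝ) * Δt + c i * Δt with hx
  have hxm : x ∈ Set.Icc a b := (hmem i).2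
  obtain ⟨r, rfl⟩ : ∃ r, s = r + 1 := ⟨s - 1, by omega⟩
  set T := fun y => taylorWithinEval φ r (Set.Icc a b) x y with hT
  have hbd : ∀ y ∈ Set.Icc a b, ‖φ y - T y‖ ≤ M * |y - x| ^ (r + 1) := fun y hy =>
    taylor_bd φ a b M r hab hφ hM x y hxm hy
  have hTx : φ x = T x := by simp [hT]
  have hex : ∑ j, S1 i j • T ((n : ℝ) * Δt - Δt + c j * Δt)
      + ∑ j, S2 i j • T ((n : ℝ) * Δt + c j * Δt) = T x := by
    simp only [hT, taylor_within_apply, smul_sum, smul_smul]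
    rw [sum_comm, sum_comm (s := univ) (t := range (r+1)), ← sum_add_distrib]
    refine sum_congr rfl fun k hk => ?_
    rw [← sum_smul, ← sum_smul, ← add_smul]
    congr 1
    have h := hp k (by simpa using hk)
    have e0 : (x - x) ^ k = Δt ^ k * (c i - c i) ^ k := by rw [← mul_pow]; ring_nf
    rw [e0, ← h, mul_add, mul_add, mul_sum, mul_sum, mul_sum, mul_sum]
    congr 1 <;> refine sum_congr rfl fun j _ => ?_
    · rw [show (n : ℝ) * Δt - Δt + c j * Δt - x = Δt * (c j - 1 - c i) by rw [hx]; ring, mul_pow]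
      ring
    · rw [show (n : ℝ) * Δt + c j * Δt - x = Δt * (c j - c i) by rw [hx]; ring, mul_pow]
      ring
  have herr : φ x - (∑ j, S1 i j • φ ((n : ℝ) * Δt - Δt + c j * Δt))
      - ∑ j, S2 i j • φ ((n : ℝ) * Δt + c j * Δt)
      = -∑ j, (S1 i j • (φ ((n : ℝ) * Δt - Δt + c j * Δt) - T ((n : ℝ) * Δt - Δt + c j * Δt))
        + S2 i j • (φ ((n : ℝ) * Δt + c j * Δt) - T ((n : ℝ) * Δt + c j * Δt))) := by
    rw [hTx, ← hex]
    simp only [smul_sub, sum_add_distrib, sum_sub_distrib]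
    abel
  rw [herr, norm_neg]
  calc _ ≤ ∑ j, (|S1 i j| * |c j - 1 - c i| ^ (r+1) + |S2 i j| * |c j - c i| ^ (r+1))
            * (M * Δt ^ (r+1)) := by
        refine (norm_sum_le _ _).trans (sum_le_sum fun j _ => ?_)
        refine (norm_add_le _ _).trans ?_
        rw [norm_smul, norm_smul, Real.norm_eq_abs, Real.norm_eq_abs]
        have h1 := hbd _ (hmem j).1
        have h2 := hbd _ (hmem j).2
        rw [show (n : ℝ) * Δt - Δt + c j * Δt - x = Δt * (c j - 1 - c i) by rw [hx]; ring,
          abs_mul, abs_of_pos hΔ, mul_pow] at h1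
        rw [show (n : ℝ) * Δt + c j * Δt - x = Δt * (c j - c i) by rw [hx]; ring,
          abs_mul, abs_of_pos hΔ, mul_pow] at h2
        have h3 := mul_le_mul_of_nonneg_left h1 (abs_nonneg (S1 i j))
        have h4 := mul_le_mul_of_nonneg_left h2 (abs_nonneg (S2 i j))
        linarith
    _ ≤ _ := by
        rw [← sum_mul, mul_assoc]
        refine mul_le_mul_of_nonneg_right ?_ (by positivity)
        exact single_le_sum (f := fun i => ∑ j, (|S1 i j| * |c j - 1 - c i| ^ (r+1)
          + |S2 i j| * |c j - c i| ^ (r+1))) (fun i _ => by positivity) (mem_univ i)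
end

section
/- (Theorem 1) Let the s-stage implicit Peer method with coefficients (c, P, R) be zero-stable (there exists K such that ‖P^n‖ ≤ K for all n ≥ 0), with pairwise distinct nodes 0 < c_i ≤ 1, c_s = 1, R lower triangular, P e = e, and stage order s, i.e. C V0 − P (C − I) V1 − R V0 D = 0. Let S2 be an arbitrary strictly lower triangular s×s real matrix and set R̂ = R S2 and Q̂ = R (I − S2) V0 V1^{−1}. Let F0, F1 : ℝ^m → ℝ^m be globally Lipschitz continuous and let u : [0, T+1] → ℝ^m be an (s+2) times continuously differentiable solution of u' = F0(u) + F1(u) such that t ↦ F0(u(t)) is (s+1) times continuously differentiable. Then there exist constants C' > 0 and h_0 > 0 such that for every step size Δt ∈ (0, h_0), every N with N Δt ≤ T, and every sequence w_0, w_1, …, w_N ∈ (ℝ^m)^s satisfying the IMEX-Peer recursion w_n = P w_{n−1} + Δt Q̂ F0(w_{n−1}) + Δt R̂ F0(w_n) + Δt R F1(w_n) for n = 1,…,N and the starting condition max_i ‖w_{0,i} − u(c_i Δt)‖ ≤ Δt^s, one has max_{0 ≤ n ≤ N} max_i ‖w_{n,i} − u(nΔt + c_i Δt)‖ ≤ C'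 Δt^s; i.e. the IMEX-Peer scheme is convergent of order s for constant step size. -/
open Finset

/-- Uniform Taylor estimate on a compact interval, in both directions. -/
theorem peer_taylor {E : Type*} [NormedAddCommGroup E] [NormedSpace ℝ E]
    (f : ℝ → E) (B : ℝ) (hB : 0 < B) (n : ℕ) (hn : 1 ≤ n)
    (hf : ContDiffOn ℝ n f (Set.Icc 0 B)) :
    ∃ M : ℝ, 0 ≤ M ∧ ∀ x ∈ Set.Icc (0 : ℝ) B, ∀ y ∈ Set.Icc (0 : ℝ) B,
      ‖f y - ∑ k ∈ range n, (y - x) ^ k •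
        ((k.factorial : ℝ)⁻¹ • iteratedDerivWithin k f (Set.Icc 0 B) x)‖ ≤ M * |y - x| ^ n := by
  obtain ⟨p, rfl⟩ : ∃ p, n = p + 1 := ⟨n - 1, by omega⟩
  have hU : UniqueDiffOn ℝ (Set.Icc (0 : ℝ) B) := uniqueDiffOn_Icc hB
  have hcont := hf.continuousOn_iteratedDerivWithin (m := p + 1) le_rfl hU
  obtain ⟨M, hM⟩ := isCompact_Icc.exists_bound_of_continuousOn hcont
  have hM0 : 0 ≤ M := (norm_nonneg _).trans (hM 0 ⟨le_rfl, hB.le⟩)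
  refine ⟨M, hM0, fun x hx y hy => ?_⟩
  have hseg : Set.uIcc x y ⊆ Set.Icc 0 B := Set.uIcc_subset_Icc hx hy
  have hfp : ContDiffOn ℝ p f (Set.Icc 0 B) := hf.of_le (by exact_mod_cast Nat.le_succ p)
  have hdp : DifferentiableOn ℝ (iteratedDerivWithin p f (Set.Icc 0 B)) (Set.Icc 0 B) :=
    hf.differentiableOn_iteratedDerivWithin (by exact_mod_cast Nat.lt_succ_self p) hU
  have key := Convex.norm_image_sub_le_of_norm_hasDerivWithin_le (s := Set.uIcc x y)
    (f := fun z => taylorWithinEval f p (Set.Icc 0 B) z y)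
    (f' := fun z => (((p.factorial : ℝ)⁻¹ * (y - z) ^ p) •
      iteratedDerivWithin (p + 1) f (Set.Icc 0 B) z)) (C := M * |y - x| ^ p)
    (fun z hz => (hasDerivWithinAt_taylorWithinEval_at_Icc y hB (hseg hz) hfp hdp).mono hseg)
    (fun z hz => by
      have h1 : |y - z| ≤ |y - x| := by
        have := Set.abs_sub_right_of_mem_uIcc hz
        exact this
      have h2 : (p.factorial : ℝ)⁻¹ ≤ 1 := by
        apply inv_le_one_of_one_le₀
        exact_mod_cast Nat.factorial_pos p
      rw [norm_smul, norm_mul, norm_pow, Real.norm_eq_abs, Real.norm_eq_abs,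
        abs_of_nonneg (by positivity : (0 : ℝ) ≤ (p.factorial : ℝ)⁻¹)]
      calc (p.factorial : ℝ)⁻¹ * |y - z| ^ p * ‖iteratedDerivWithin (p + 1) f (Set.Icc 0 B) z‖
          ≤ 1 * |y - x| ^ p * M := by
            gcongr
            exact hM z (hseg hz)
        _ = M * |y - x| ^ p := by ring)
    (convex_uIcc x y) Set.left_mem_uIcc Set.right_mem_uIcc
  simp only [taylorWithinEval_self] at key
  rw [taylor_within_apply] at key
  rw [Real.norm_eq_abs, mul_assoc, ← pow_succ] at key
  convert key using 4 with k hk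
  rw [smul_smul, mul_comm]

/-- Action of a matrix on a vector of stages. -/
noncomputable def peerAct {s : ℕ} {E : Type*} [NormedAddCommGroup E] [NormedSpace ℝ E]
    (A : Matrix (Fin s) (Fin s) ℝ) : (Fin s → E) →ₗ[ℝ] (Fin s → E) where
  toFun v i := ∑ j, A i j • v j
  map_add' v w := by
    ext1 i
    simp [smul_add, sum_add_distrib]
  map_smul' r v := by
    ext1 i
    simp only [Pi.smul_apply, smul_sum, RingHom.id_apply, smul_comm r]

theorem peerAct_apply {s : ℕ} {E : Type*} [NormedAddCommGroup E] [NormedSpace ℝ E]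
    (A : Matrix (Fin s) (Fin s) ℝ) (v : Fin s → E) (i : Fin s) :
    peerAct A v i = ∑ j, A i j • v j := rfl

theorem peerAct_mul {s : ℕ} {E : Type*} [NormedAddCommGroup E] [NormedSpace ℝ E]
    (A B : Matrix (Fin s) (Fin s) ℝ) (v : Fin s → E) :
    peerAct (A * B) v = peerAct A (peerAct B v) := by
  ext1 i
  simp only [peerAct_apply, Matrix.mul_apply, sum_smul, smul_sum, smul_smul]
  rw [sum_comm]

theorem peerAct_one {s : ℕ} {E : Type*} [NormedAddCommGroup E] [NormedSpace ℝ E]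
    (v : Fin s → E) : peerAct (1 : Matrix (Fin s) (Fin s) ℝ) v = v := by
  ext1 i
  simp [peerAct_apply, Matrix.one_apply]

theorem peerAct_norm {s : ℕ} {E : Type*} [NormedAddCommGroup E] [NormedSpace ℝ E]
    (A : Matrix (Fin s) (Fin s) ℝ) (K : ℝ) (hK : 0 ≤ K) (hA : ∀ i j, |A i j| ≤ K)
    (v : Fin s → E) : ‖peerAct A v‖ ≤ (s * K) * ‖v‖ := by
  rw [pi_norm_le_iff_of_nonneg (by positivity)]
  intro i
  rw [peerAct_apply]
  calc ‖∑ j, A i j • v j‖ ≤ ∑ j : Fin s, K * ‖v‖ := by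
        refine norm_sum_le_of_le _ fun j _ => ?_
        rw [norm_smul]
        exact mul_le_mul (hA i j) (norm_le_pi_norm v j) (norm_nonneg _) hK
    _ = (s * K) * ‖v‖ := by simp [mul_assoc]

theorem peerAct_bound {s : ℕ} (E : Type*) [NormedAddCommGroup E] [NormedSpace ℝ E]
    (A : Matrix (Fin s) (Fin s) ℝ) :
    ∃ B : ℝ, 0 ≤ B ∧ ∀ v : Fin s → E, ‖peerAct A v‖ ≤ B * ‖v‖ := by
  refine ⟨s * ∑ i, ∑ j, |A i j|, by positivity, fun v => peerAct_norm A _ (by positivity) ?_ v⟩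
  intro i j
  calc |A i j| ≤ ∑ j, |A i j| :=
        single_le_sum (f := fun j => |A i j|) (fun _ _ => abs_nonneg _) (mem_univ j)
    _ ≤ ∑ i, ∑ j, |A i j| :=
        single_le_sum (f := fun i => ∑ j, |A i j|)
          (fun _ _ => sum_nonneg fun _ _ => abs_nonneg _) (mem_univ i)

/-- Discrete Gronwall inequality. -/
theorem peer_gronwall (N : ℕ) (E : ℕ → ℝ) (a b : ℝ) (_ha : 0 ≤ a) (hb : 0 ≤ b)
    (h : ∀ n ≤ N, E n ≤ a + b * ∑ k ∈ range n, E k) :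
    ∀ n ≤ N, E n ≤ a * (1 + b) ^ n := by
  have aux : ∀ n ≤ N, a + b * ∑ k ∈ range n, E k ≤ a * (1 + b) ^ n := by
    intro n
    induction n with
    | zero => simp
    | succ n ih =>
      intro hn
      have h1 := ih (by omega)
      have h2 := h n (by omega)
      rw [sum_range_succ, pow_succ]
      have := mul_le_mul_of_nonneg_left (h2.trans h1) hb
      nlinarith
  exact fun n hn => (h n hn).trans (aux n hn)

theorem peer_unroll {s : ℕ} {E : Type*} [NormedAddCommGroup E] [NormedSpace ℝ E]
    (P : Matrix (Fin s) (Fin s) ℝ) (N : ℕ) (e g : ℕ → Fin s → E)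
    (h : ∀ n, n < N → e (n + 1) = peerAct P (e n) + g n) :
    ∀ n ≤ N, e n = peerAct (P ^ n) (e 0) + ∑ k ∈ range n, peerAct (P ^ (n - 1 - k)) (g k) := by
  intro n
  induction n with
  | zero => simp [peerAct_one]
  | succ n ih =>
    intro hn
    rw [h n hn, ih (by omega), map_add, ← peerAct_mul, ← pow_succ', map_sum, sum_range_succ,
      add_assoc]
    congr 2
    · refine sum_congr rfl fun k hk => ?_
      rw [← peerAct_mul, ← pow_succ']
      congr 3
      have := mem_range.1 hk
      omega
    · simp [peerAct_one]

theorem peer_stability {s : ℕ} (hs : 1 ≤ s) {E : Type*} [NormedAddCommGroup E] [NormedSpace ℝ E]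
    (P : Matrix (Fin s) (Fin s) ℝ)
    (hzs : ∃ K0 : ℝ, ∀ n : ℕ, ∀ i j : Fin s, |(P ^ n) i j| ≤ K0)
    (T A M : ℝ) (hT : 0 < T) (hA : 0 ≤ A) (hM : 0 ≤ M) :
    ∃ C' > (0 : ℝ), ∃ h0 > (0 : ℝ), ∀ Δt : ℝ, 0 < Δt → Δt < h0 →
      ∀ N : ℕ, (N : ℝ) * Δt ≤ T → ∀ e g : ℕ → Fin s → E,
      (∀ n, n < N → e (n + 1) = peerAct P (e n) + g n) →
      (∀ n, n < N → ‖g n‖ ≤ Δt * A * (‖e n‖ + ‖e (n + 1)‖) + M * Δt ^ (s + 1)) →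
      ‖e 0‖ ≤ Δt ^ s → ∀ n ≤ N, ‖e n‖ ≤ C' * Δt ^ s := by
  obtain ⟨K0, hK0⟩ := hzs
  have hK00 : 0 ≤ K0 := (abs_nonneg _).trans (hK0 0 ⟨0, hs⟩ ⟨0, hs⟩)
  obtain ⟨K, hK, hPK⟩ : ∃ K : ℝ, 0 < K ∧ ∀ (n : ℕ) (v : Fin s → E),
      ‖peerAct (P ^ n) v‖ ≤ K * ‖v‖ := by
    refine ⟨s * K0 + 1, by positivity, fun n v => ?_⟩
    have := peerAct_norm (P ^ n) K0 hK00 (hK0 n) v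
    nlinarith [norm_nonneg v]
  refine ⟨2 * K * (1 + T * M) * Real.exp (4 * K * A * T), by positivity,
    1 / (2 * (K * A + 1)), by positivity, ?_⟩
  intro Δ hΔ hΔ0 N hN e g he hg he0
  have hKA : K * A * Δ ≤ 1 / 2 := by
    rw [lt_div_iff₀ (by positivity)] at hΔ0
    nlinarith [mul_nonneg hK.le hA]
  have hun := peer_unroll P N e g he
  have hmain : ∀ n ≤ N, ‖e n‖ ≤ 2 * K * (1 + T * M) * Δ ^ s
      + 4 * K * A * Δ * ∑ k ∈ range n, ‖e k‖ := by
    intro n hn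
    have h1 : ‖e n‖ ≤ K * ‖e 0‖ + ∑ k ∈ range n, K * ‖g k‖ := by
      conv_lhs => rw [hun n hn]
      refine (norm_add_le _ _).trans (add_le_add (hPK _ _) ?_)
      exact norm_sum_le_of_le _ fun k _ => hPK _ _
    have h2 : ∑ k ∈ range n, K * ‖g k‖ ≤
        ∑ k ∈ range n, K * (Δ * A * (‖e k‖ + ‖e (k + 1)‖) + M * Δ ^ (s + 1)) := by
      refine sum_le_sum fun k hk => ?_
      have := mem_range.1 hk
      exact mul_le_mul_of_nonneg_left (hg k (by omega)) hK.le
    have h3 : ∑ k ∈ range n, K * (Δ * A * (‖e k‖ + ‖e (k + 1)‖) + M * Δ ^ (s + 1))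
        = K * Δ * A * (∑ k ∈ range n, ‖e k‖ + ∑ k ∈ range n, ‖e (k + 1)‖)
          + n * (K * M * Δ ^ (s + 1)) := by
      rw [← mul_sum, sum_add_distrib, ← mul_sum, sum_add_distrib, sum_const, card_range,
        nsmul_eq_mul]
      ring
    have h4 : ∑ k ∈ range n, ‖e (k + 1)‖ ≤ ∑ k ∈ range n, ‖e k‖ + ‖e n‖ := by
      rw [← sum_range_succ, sum_range_succ']
      exact le_add_of_nonneg_right (norm_nonneg _)
    have h5 : (n : ℝ) * (K * M * Δ ^ (s + 1)) ≤ T * (K * M * Δ ^ s) := by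
      have : (n : ℝ) * Δ ≤ T :=
        (mul_le_mul_of_nonneg_right (by exact_mod_cast hn) hΔ.le).trans hN
      calc (n : ℝ) * (K * M * Δ ^ (s + 1)) = (n * Δ) * (K * M * Δ ^ s) := by ring
        _ ≤ _ := mul_le_mul_of_nonneg_right this (by positivity)
    have h6 : K * Δ * A * (∑ k ∈ range n, ‖e k‖ + ∑ k ∈ range n, ‖e (k + 1)‖) ≤
        K * Δ * A * (∑ k ∈ range n, ‖e k‖ + (∑ k ∈ range n, ‖e k‖ + ‖e n‖)) := by
      gcongr
    have h7 : K * A * Δ * ‖e n‖ ≤ 1 / 2 * ‖e n‖ :=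
      mul_le_mul_of_nonneg_right hKA (norm_nonneg _)
    have h8 : K * ‖e 0‖ ≤ K * Δ ^ s := mul_le_mul_of_nonneg_left he0 hK.le
    nlinarith
  intro n hn
  have h9 := peer_gronwall N (fun n => ‖e n‖) _ _ (by positivity) (by positivity) hmain n hn
  have h10 : (1 + 4 * K * A * Δ) ^ n ≤ Real.exp (4 * K * A * T) := by
    have hnT : (n : ℝ) * Δ ≤ T :=
      (mul_le_mul_of_nonneg_right (by exact_mod_cast hn) hΔ.le).trans hN
    calc (1 + 4 * K * A * Δ) ^ n ≤ Real.exp (4 * K * A * Δ) ^ n := by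
          gcongr
          linarith [Real.add_one_le_exp (4 * K * A * Δ)]
      _ = Real.exp (4 * K * A * (n * Δ)) := by
          rw [← Real.exp_nat_mul]
          ring_nf
      _ ≤ _ := by gcongr
  calc ‖e n‖ ≤ _ := h9
    _ ≤ 2 * K * (1 + T * M) * Δ ^ s * Real.exp (4 * K * A * T) := by gcongr
    _ = _ := by ring

/-- Values at the nodes of a polynomial with vector coefficients. -/
noncomputable def peerPoly {s : ℕ} {E : Type*} [NormedAddCommGroup E] [NormedSpace ℝ E]
    (d : Fin s → ℝ) (n : ℕ) (a : ℕ → E) (Δ : ℝ) : Fin s → E :=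
  fun i => ∑ k ∈ range n, (d i * Δ) ^ k • a k

theorem peerAct_poly {s : ℕ} {E : Type*} [NormedAddCommGroup E] [NormedSpace ℝ E]
    (X : Matrix (Fin s) (Fin s) ℝ) (d : Fin s → ℝ) (n : ℕ) (a : ℕ → E) (Δ : ℝ) (i : Fin s) :
    peerAct X (peerPoly d n a Δ) i =
      ∑ k ∈ range n, ((∑ j, X i j * d j ^ k) * Δ ^ k) • a k := by
  simp only [peerAct_apply, peerPoly, smul_sum, sum_mul, sum_smul, smul_smul]
  rw [sum_comm]
  refine sum_congr rfl fun k _ => sum_congr rfl fun j _ => ?_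
  rw [mul_pow, mul_assoc]

theorem peer_taylor_nodes {s : ℕ} {E : Type*} [NormedAddCommGroup E] [NormedSpace ℝ E]
    (f : ℝ → E) (B : ℝ) (hB : 0 < B) (n : ℕ) (hn : 1 ≤ n)
    (hf : ContDiffOn ℝ n f (Set.Icc 0 B)) :
    ∃ M : ℝ, 0 ≤ M ∧ ∀ d : Fin s → ℝ, (∀ i, |d i| ≤ 1) → ∀ Δ : ℝ, 0 < Δ → ∀ x : ℝ,
      0 ≤ x - Δ → x + Δ ≤ B →
      ‖(fun i => f (x + d i * Δ)) - peerPoly d n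
        (fun k => (k.factorial : ℝ)⁻¹ • iteratedDerivWithin k f (Set.Icc 0 B) x) Δ‖
        ≤ M * Δ ^ n := by
  obtain ⟨M, hM, h⟩ := peer_taylor f B hB n hn hf
  refine ⟨M, hM, fun d hd Δ hΔ x h0 h1 => ?_⟩
  rw [pi_norm_le_iff_of_nonneg (by positivity)]
  intro i
  have hdi := abs_le.1 (hd i)
  have hb := h x ⟨by linarith, by linarith⟩ (x + d i * Δ) ⟨by nlinarith, by nlinarith⟩
  simp only [add_sub_cancel_left] at hb
  refine hb.trans ?_
  have : |d i * Δ| ≤ Δ := by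
    rw [abs_mul, abs_of_pos hΔ]
    nlinarith [hd i]
  gcongr

theorem peer_consistency_A {s : ℕ} (hs : 1 ≤ s) {E : Type*} [NormedAddCommGroup E]
    [NormedSpace ℝ E] (c : Fin s → ℝ) (hc01 : ∀ i, 0 < c i ∧ c i ≤ 1)
    (P R : Matrix (Fin s) (Fin s) ℝ) (hPe : ∀ i : Fin s, ∑ j, P i j = 1)
    (hord : ∀ i, ∀ k < s, c i ^ (k + 1) - ∑ j, P i j * (c j - 1) ^ (k + 1)
      - (∑ j, R i j * c j ^ k) * (k + 1) = 0)
    (u : ℝ → E) (B : ℝ) (hB : 0 < B)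
    (hu : ContDiffOn ℝ ((s + 1 : ℕ)) u (Set.Icc 0 B)) :
    ∃ M : ℝ, 0 ≤ M ∧ ∀ Δ : ℝ, 0 < Δ → ∀ x : ℝ, 0 ≤ x - Δ → x + Δ ≤ B →
      ‖(fun i => u (x + c i * Δ)) - peerAct P (fun i => u (x + (c i - 1) * Δ))
        - Δ • peerAct R (fun i => derivWithin u (Set.Icc 0 B) (x + c i * Δ))‖
        ≤ M * Δ ^ (s + 1) := by
  have hU : UniqueDiffOn ℝ (Set.Icc (0 : ℝ) B) := uniqueDiffOn_Icc hB
  have hd : ContDiffOn ℝ s (derivWithin u (Set.Icc 0 B)) (Set.Icc 0 B) :=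
    hu.derivWithin hU (by norm_cast)
  obtain ⟨M1, hM1, h1⟩ := peer_taylor_nodes (s := s) u B hB (s + 1) (by omega) hu
  obtain ⟨M2, hM2, h2⟩ := peer_taylor_nodes (s := s) _ B hB s hs hd
  obtain ⟨BP, hBP, hP⟩ := peerAct_bound E P
  obtain ⟨BR, hBR, hR⟩ := peerAct_bound E R
  refine ⟨M1 + BP * M1 + BR * M2, by positivity, fun Δ hΔ x hx0 hx1 => ?_⟩
  have hc1 : ∀ i, |c i| ≤ 1 := fun i => abs_le.2 ⟨by linarith [hc01 i], (hc01 i).2⟩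
  have hc2 : ∀ i, |c i - 1| ≤ 1 := fun i =>
    abs_le.2 ⟨by linarith [(hc01 i).1], by linarith [(hc01 i).2]⟩
  have r1 := h1 c hc1 Δ hΔ x hx0 hx1
  have r2 := h1 (fun i => c i - 1) hc2 Δ hΔ x hx0 hx1
  have r3 := h2 c hc1 Δ hΔ x hx0 hx1
  set a : ℕ → E := fun k => (k.factorial : ℝ)⁻¹ • iteratedDerivWithin k u (Set.Icc 0 B) x with ha
  set b : ℕ → E := fun k => (k.factorial : ℝ)⁻¹ •
    iteratedDerivWithin k (derivWithin u (Set.Icc 0 B)) (Set.Icc 0 B) x with hb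
  have hab : ∀ k, b k = ((k : ℝ) + 1) • a (k + 1) := by
    intro k
    simp only [ha, hb, smul_smul, iteratedDerivWithin_succ']
    congr 1
    rw [Nat.factorial_succ]
    push_cast
    have : (k.factorial : ℝ) ≠ 0 := by exact_mod_cast k.factorial_ne_zero
    have : (k : ℝ) + 1 ≠ 0 := by positivity
    field_simp
  clear_value a b
  have hex : peerPoly c (s + 1) a Δ - peerAct P (peerPoly (fun i => c i - 1) (s + 1) a Δ)
      - Δ • peerAct R (peerPoly c s b Δ) = 0 := by
    ext1 i
    simp only [Pi.sub_apply, Pi.smul_apply, peerAct_poly, Pi.zero_apply]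
    simp only [peerPoly, sum_range_succ', pow_zero, mul_one, hPe, add_sub_add_right_eq_sub,
      smul_sum, ← sum_sub_distrib]
    refine sum_eq_zero fun k hk => ?_
    rw [hab, smul_smul, smul_smul, ← sub_smul, ← sub_smul]
    have := hord i k (mem_range.1 hk)
    have h0 : (c i * Δ) ^ (k + 1) - (∑ j, P i j * (c j - 1) ^ (k + 1)) * Δ ^ (k + 1)
      - Δ * ((∑ j, R i j * c j ^ k) * Δ ^ k * (k + 1)) = 0 := by
      linear_combination Δ ^ (k + 1) * this
    rw [← mul_assoc] at h0
    rw [h0, zero_smul]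
  have hrw : (fun i => u (x + c i * Δ)) - peerAct P (fun i => u (x + (c i - 1) * Δ))
        - Δ • peerAct R (fun i => derivWithin u (Set.Icc 0 B) (x + c i * Δ)) =
      ((fun i => u (x + c i * Δ)) - peerPoly c (s + 1) a Δ)
      - peerAct P ((fun i => u (x + (c i - 1) * Δ)) - peerPoly (fun i => c i - 1) (s + 1) a Δ)
      - Δ • peerAct R ((fun i => derivWithin u (Set.Icc 0 B) (x + c i * Δ))
          - peerPoly c s b Δ) := by
    rw [map_sub, map_sub, smul_sub]
    rw [← sub_eq_zero, ← hex]
    abel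
  rw [hrw]
  refine (norm_sub_le _ _).trans ?_
  refine (add_le_add (norm_sub_le _ _) le_rfl).trans ?_
  rw [norm_smul, Real.norm_eq_abs, abs_of_pos hΔ]
  have e2 := (hP _).trans (mul_le_mul_of_nonneg_left r2 hBP)
  have e3 := mul_le_mul_of_nonneg_left ((hR _).trans (mul_le_mul_of_nonneg_left r3 hBR)) hΔ.le
  calc _ ≤ M1 * Δ ^ (s + 1) + BP * (M1 * Δ ^ (s + 1)) + Δ * (BR * (M2 * Δ ^ s)) :=
        add_le_add (add_le_add r1 e2) e3
    _ = _ := by ring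

theorem peer_consistency_B {s : ℕ} (hs : 1 ≤ s) {E : Type*} [NormedAddCommGroup E]
    [NormedSpace ℝ E] (c : Fin s → ℝ) (hc01 : ∀ i, 0 < c i ∧ c i ≤ 1)
    (Qh Rh R : Matrix (Fin s) (Fin s) ℝ)
    (hord : ∀ i, ∀ k < s, ∑ j, Qh i j * (c j - 1) ^ k + ∑ j, Rh i j * c j ^ k
      - (∑ j, R i j * c j ^ k) = 0)
    (φ : ℝ → E) (B : ℝ) (hB : 0 < B)
    (hφ : ContDiffOn ℝ s φ (Set.Icc 0 B)) :
    ∃ M : ℝ, 0 ≤ M ∧ ∀ Δ : ℝ, 0 < Δ → ∀ x : ℝ, 0 ≤ x - Δ → x + Δ ≤ B →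
      ‖peerAct Qh (fun i => φ (x + (c i - 1) * Δ)) + peerAct Rh (fun i => φ (x + c i * Δ))
        - peerAct R (fun i => φ (x + c i * Δ))‖ ≤ M * Δ ^ s := by
  obtain ⟨M1, hM1, h1⟩ := peer_taylor_nodes (s := s) φ B hB s hs hφ
  obtain ⟨BQ, hBQ, hQ⟩ := peerAct_bound E Qh
  obtain ⟨BP, hBP, hP⟩ := peerAct_bound E Rh
  obtain ⟨BR, hBR, hR⟩ := peerAct_bound E R
  refine ⟨BQ * M1 + BP * M1 + BR * M1, by positivity, fun Δ hΔ x hx0 hx1 => ?_⟩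
  have hc1 : ∀ i, |c i| ≤ 1 := fun i => abs_le.2 ⟨by linarith [hc01 i], (hc01 i).2⟩
  have hc2 : ∀ i, |c i - 1| ≤ 1 := fun i =>
    abs_le.2 ⟨by linarith [(hc01 i).1], by linarith [(hc01 i).2]⟩
  have r1 := h1 c hc1 Δ hΔ x hx0 hx1
  have r2 := h1 (fun i => c i - 1) hc2 Δ hΔ x hx0 hx1
  set a : ℕ → E := fun k => (k.factorial : ℝ)⁻¹ • iteratedDerivWithin k φ (Set.Icc 0 B) x with ha
  have hex : peerAct Qh (peerPoly (fun i => c i - 1) s a Δ) + peerAct Rh (peerPoly c s a Δ)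
      - peerAct R (peerPoly c s a Δ) = 0 := by
    ext1 i
    simp only [Pi.sub_apply, Pi.add_apply, peerAct_poly, Pi.zero_apply]
    rw [← sum_add_distrib, ← sum_sub_distrib]
    refine sum_eq_zero fun k hk => ?_
    rw [← add_smul, ← sub_smul, ← add_mul, ← sub_mul, hord i k (mem_range.1 hk), zero_mul,
      zero_smul]
  have hrw : peerAct Qh (fun i => φ (x + (c i - 1) * Δ)) + peerAct Rh (fun i => φ (x + c i * Δ))
        - peerAct R (fun i => φ (x + c i * Δ)) =
      peerAct Qh ((fun i => φ (x + (c i - 1) * Δ)) - peerPoly (fun i => c i - 1) s a Δ)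
      + peerAct Rh ((fun i => φ (x + c i * Δ)) - peerPoly c s a Δ)
      - peerAct R ((fun i => φ (x + c i * Δ)) - peerPoly c s a Δ) := by
    rw [map_sub, map_sub, map_sub]
    rw [← sub_eq_zero, ← hex]
    abel
  rw [hrw]
  refine (norm_sub_le _ _).trans ?_
  refine (add_le_add (norm_add_le _ _) le_rfl).trans ?_
  have e1 := (hQ _).trans (mul_le_mul_of_nonneg_left r2 hBQ)
  have e2 := (hP _).trans (mul_le_mul_of_nonneg_left r1 hBP)
  have e3 := (hR _).trans (mul_le_mul_of_nonneg_left r1 hBR)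
  calc _ ≤ BQ * (M1 * Δ ^ s) + BP * (M1 * Δ ^ s) + BR * (M1 * Δ ^ s) :=
        add_le_add (add_le_add e1 e2) e3
    _ = _ := by ring

theorem peer_lip {s : ℕ} {E : Type*} [NormedAddCommGroup E]
    (F : E → E) (L : NNReal) (hF : LipschitzWith L F) (v w : Fin s → E) :
    ‖(fun i => F (v i)) - (fun i => F (w i))‖ ≤ L * ‖v - w‖ := by
  rw [pi_norm_le_iff_of_nonneg (by positivity)]
  intro i
  exact (hF.norm_sub_le _ _).trans
    (mul_le_mul_of_nonneg_left (norm_le_pi_norm (v - w) i) L.2)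

/-- Theorem 1: Convergence of order `s` of the IMEX-Peer scheme obtained
by extrapolation (`R̂ = R S2`, `Q̂ = R (I - S2) V0 V1⁻¹`) from a zero-stable implicit Peer
method of stage order `s`, for globally Lipschitz `F0, F1` and a smooth solution `u`. -/
theorem stmt_11 (s m : ℕ) (hs : 1 ≤ s) (T : ℝ) (hT : 0 < T)
    (c : Fin s → ℝ) (hc : Function.Injective c)
    (hc01 : ∀ i, 0 < c i ∧ c i ≤ 1) (hcs : c ⟨s - 1, by omega⟩ = 1)
    (P R S2 Qh Rh V0 V1 C D : Matrix (Fin s) (Fin s) ℝ)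
    (hV0 : ∀ i j, V0 i j = c i ^ (j : ℕ))
    (hV1 : ∀ i j, V1 i j = (c i - 1) ^ (j : ℕ))
    (hC : C = Matrix.diagonal c)
    (hD : D = Matrix.diagonal fun j : Fin s => ((j : ℕ) + 1 : ℝ))
    (hRtri : ∀ i j : Fin s, i < j → R i j = 0)
    (hzs : ∃ K0 : ℝ, ∀ n : ℕ, ∀ i j : Fin s, |(P ^ n) i j| ≤ K0)
    (hPe : ∀ i : Fin s, ∑ j, P i j = 1)
    (hso : C * V0 - P * (C - 1) * V1 - R * V0 * D = 0)
    (hS2tri : ∀ i j : Fin s, i ≤ j → S2 i j = 0)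
    (hRh : Rh = R * S2) (hQ : Qh = R * ((1 - S2) * V0 * V1⁻¹))
    (F0 F1 : EuclideanSpace ℝ (Fin m) → EuclideanSpace ℝ (Fin m))
    (L0 L1 : NNReal) (hF0 : LipschitzWith L0 F0) (hF1 : LipschitzWith L1 F1)
    (u : ℝ → EuclideanSpace ℝ (Fin m))
    (hu : ContDiffOn ℝ ((s : ℕ∞) + 2) u (Set.Icc 0 (T + 1)))
    (hφ : ContDiffOn ℝ ((s : ℕ∞) + 1) (fun t => F0 (u t)) (Set.Icc 0 (T + 1)))
    (hode : ∀ t ∈ Set.Icc (0 : ℝ) (T + 1),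
      HasDerivWithinAt u (F0 (u t) + F1 (u t)) (Set.Icc 0 (T + 1)) t) :
    ∃ C' > (0 : ℝ), ∃ h0 > (0 : ℝ), ∀ Δt : ℝ, 0 < Δt → Δt < h0 →
      ∀ N : ℕ, (N : ℝ) * Δt ≤ T →
      ∀ w : ℕ → Fin s → EuclideanSpace ℝ (Fin m),
        (∀ n : ℕ, 1 ≤ n → n ≤ N → ∀ i : Fin s,
          w n i = (∑ j, P i j • w (n - 1) j)
            + Δt • (∑ j, Qh i j • F0 (w (n - 1) j))
            + Δt • (∑ j, Rh i j • F0 (w n j))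
            + Δt • (∑ j, R i j • F1 (w n j))) →
        (∀ i : Fin s, ‖w 0 i - u (c i * Δt)‖ ≤ Δt ^ s) →
        ∀ n : ℕ, n ≤ N → ∀ i : Fin s,
          ‖w n i - u ((n : ℝ) * Δt + c i * Δt)‖ ≤ C' * Δt ^ s := by
  have hord1 : ∀ i, ∀ k < s, c i ^ (k + 1) - ∑ j, P i j * (c j - 1) ^ (k + 1)
      - (∑ j, R i j * c j ^ k) * (k + 1) = 0 := by
    intro i k hk
    have h := congrFun (congrFun hso i) ⟨k, hk⟩
    have hC1 : C - 1 = Matrix.diagonal (fun i => c i - 1) := by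
      rw [hC, ← Matrix.diagonal_one, Matrix.diagonal_sub]
    rw [mul_assoc P, hC1, hC, hD] at h
    simp only [Matrix.sub_apply, Matrix.diagonal_mul, Matrix.mul_diagonal, Matrix.mul_apply (M := P),
      Matrix.mul_apply (M := R), hV0, hV1, Matrix.zero_apply, ← pow_succ'] at h
    exact h
  have hV1u : IsUnit V1.det := by
    have : V1 = Matrix.vandermonde (fun i => c i - 1) := by
      ext i j
      rw [hV1, Matrix.vandermonde_apply]
    rw [this, isUnit_iff_ne_zero, Matrix.det_vandermonde_ne_zero_iff]
    intro i j hij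
    exact hc (sub_left_injective hij)
  have hord2 : ∀ i, ∀ k < s, ∑ j, Qh i j * (c j - 1) ^ k + ∑ j, Rh i j * c j ^ k
      - (∑ j, R i j * c j ^ k) = 0 := by
    intro i k hk
    have hm : Qh * V1 + Rh * V0 - R * V0 = 0 := by
      rw [hQ, hRh, mul_assoc R, mul_assoc _ V1⁻¹ V1, Matrix.nonsing_inv_mul _ hV1u]
      noncomm_ring
    have h := congrFun (congrFun hm i) ⟨k, hk⟩
    simpa only [Matrix.sub_apply, Matrix.add_apply, Matrix.mul_apply, hV0, hV1,
      Matrix.zero_apply] using h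
  have hB : 0 < T + 1 := by linarith
  have hU : UniqueDiffOn ℝ (Set.Icc (0 : ℝ) (T + 1)) := uniqueDiffOn_Icc hB
  have hu' : ContDiffOn ℝ ((s + 1 : ℕ)) u (Set.Icc 0 (T + 1)) :=
    hu.of_le (by
      have h12 : ((s + 1 : ℕ) : WithTop ℕ∞) ≤ ((s + 2 : ℕ) : WithTop ℕ∞) := by
        exact_mod_cast Nat.le_succ (s + 1)
      refine h12.trans (le_of_eq ?_)
      push_cast
      rfl)
  have hφ' : ContDiffOn ℝ s (fun t => F0 (u t)) (Set.Icc 0 (T + 1)) :=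
    hφ.of_le (by norm_cast; omega)
  obtain ⟨MA, hMA, hA⟩ := peer_consistency_A hs c hc01 P R hPe hord1 u (T + 1) hB hu'
  obtain ⟨MB, hMB, hBc⟩ := peer_consistency_B hs c hc01 Qh Rh R hord2 _ (T + 1) hB hφ'
  obtain ⟨BQ, hBQ, hQb⟩ := peerAct_bound (EuclideanSpace ℝ (Fin m)) Qh
  obtain ⟨BH, hBH, hHb⟩ := peerAct_bound (EuclideanSpace ℝ (Fin m)) Rh
  obtain ⟨BR, hBR, hRb⟩ := peerAct_bound (EuclideanSpace ℝ (Fin m)) R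
  have hL0 : (0 : ℝ) ≤ L0 := L0.2
  have hL1 : (0 : ℝ) ≤ L1 := L1.2
  obtain ⟨C', hC', h0, hh0, hstab⟩ := peer_stability (E := EuclideanSpace ℝ (Fin m)) hs P hzs T
    (BQ * L0 + BH * L0 + BR * L1) (MA + MB) hT (by positivity) (by positivity)
  refine ⟨C', hC', min h0 1, by positivity, ?_⟩
  intro Δ hΔ hΔ0 N hN w hw hw0
  have hΔh : Δ < h0 := hΔ0.trans_le (min_le_left _ _)
  have hΔ1 : Δ < 1 := hΔ0.trans_le (min_le_right _ _)
  let W : ℕ → Fin s → EuclideanSpace ℝ (Fin m) := fun n i => u ((n : ℝ) * Δ + c i * Δ)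
  have key := hstab Δ hΔ hΔh N hN (fun n => w n - W n)
    (fun n => (w (n + 1) - W (n + 1)) - peerAct P (w n - W n))
    (fun n _ => by abel) ?_ ?_
  · intro n hn i
    exact (norm_le_pi_norm (w n - W n) i).trans (key n hn)
  · intro n hn
    have hx0 : 0 ≤ ((n + 1 : ℕ) : ℝ) * Δ - Δ := by
      push_cast
      have : 0 ≤ (n : ℝ) * Δ := by positivity
      linarith
    have hx1 : ((n + 1 : ℕ) : ℝ) * Δ + Δ ≤ T + 1 := by
      have : ((n + 1 : ℕ) : ℝ) * Δ ≤ N * Δ :=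
        mul_le_mul_of_nonneg_right (by exact_mod_cast hn) hΔ.le
      linarith
    have rA := hA Δ hΔ _ hx0 hx1
    have rB := hBc Δ hΔ _ hx0 hx1
    have hm : ∀ i, ((n + 1 : ℕ) : ℝ) * Δ + (c i - 1) * Δ = (n : ℝ) * Δ + c i * Δ := by
      intro i
      push_cast
      ring
    have hder : ∀ i, derivWithin u (Set.Icc 0 (T + 1)) (((n + 1 : ℕ) : ℝ) * Δ + c i * Δ) =
        F0 (W (n + 1) i) + F1 (W (n + 1) i) := by
      intro i
      have h1 := (hc01 i).1
      have h2 := (hc01 i).2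
      have hmem : ((n + 1 : ℕ) : ℝ) * Δ + c i * Δ ∈ Set.Icc (0 : ℝ) (T + 1) :=
        ⟨by positivity, by nlinarith⟩
      exact (hode _ hmem).derivWithin (hU _ hmem)
    simp only [hm, hder] at rA rB
    change ‖W (n + 1) - peerAct P (W n) - Δ • peerAct R
      ((fun i => F0 (W (n + 1) i)) + (fun i => F1 (W (n + 1) i)))‖ ≤ _ at rA
    change ‖peerAct Qh (fun i => F0 (W n i)) + peerAct Rh (fun i => F0 (W (n + 1) i))
        - peerAct R (fun i => F0 (W (n + 1) i))‖ ≤ _ at rB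
    have hwn : w (n + 1) = peerAct P (w n) + Δ • peerAct Qh (fun i => F0 (w n i))
        + Δ • peerAct Rh (fun i => F0 (w (n + 1) i))
        + Δ • peerAct R (fun i => F1 (w (n + 1) i)) := by
      ext1 i
      exact hw (n + 1) (by omega) hn i
    have hg : (w (n + 1) - W (n + 1)) - peerAct P (w n - W n) =
        Δ • peerAct Qh ((fun i => F0 (w n i)) - (fun i => F0 (W n i)))
        + Δ • peerAct Rh ((fun i => F0 (w (n + 1) i)) - (fun i => F0 (W (n + 1) i)))
        + Δ • peerAct R ((fun i => F1 (w (n + 1) i)) - (fun i => F1 (W (n + 1) i)))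
        - (W (n + 1) - peerAct P (W n) - Δ • peerAct R
            ((fun i => F0 (W (n + 1) i)) + (fun i => F1 (W (n + 1) i))))
        + Δ • (peerAct Qh (fun i => F0 (W n i)) + peerAct Rh (fun i => F0 (W (n + 1) i))
          - peerAct R (fun i => F0 (W (n + 1) i))) := by
      conv_lhs => rw [hwn]
      simp only [map_sub, map_add, smul_sub, smul_add]
      abel
    have l1 := (hQb _).trans (mul_le_mul_of_nonneg_left (peer_lip F0 L0 hF0 (w n) (W n)) hBQ)
    have l2 := (hHb _).trans
      (mul_le_mul_of_nonneg_left (peer_lip F0 L0 hF0 (w (n + 1)) (W (n + 1))) hBH)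
    have l3 := (hRb _).trans
      (mul_le_mul_of_nonneg_left (peer_lip F1 L1 hF1 (w (n + 1)) (W (n + 1))) hBR)
    have hsm : ∀ (v : Fin s → EuclideanSpace ℝ (Fin m)) (q : ℝ), ‖v‖ ≤ q → ‖Δ • v‖ ≤ Δ * q := by
      intro v q hv
      rw [norm_smul, Real.norm_eq_abs, abs_of_pos hΔ]
      exact mul_le_mul_of_nonneg_left hv hΔ.le
    change ‖(w (n + 1) - W (n + 1)) - peerAct P (w n - W n)‖ ≤
      Δ * (BQ * L0 + BH * L0 + BR * L1) * (‖w n - W n‖ + ‖w (n + 1) - W (n + 1)‖)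
        + (MA + MB) * Δ ^ (s + 1)
    rw [hg]
    refine (norm_add_le_of_le (norm_sub_le_of_le (norm_add_le_of_le (norm_add_le_of_le
      (hsm _ _ l1) (hsm _ _ l2)) (hsm _ _ l3)) rA) (hsm _ _ rB)).trans ?_
    have p1 : 0 ≤ Δ * (BQ * L0) * ‖w (n + 1) - W (n + 1)‖ := by positivity
    have p2 : 0 ≤ Δ * (BH * L0 + BR * L1) * ‖w n - W n‖ := by positivity
    have p3 : Δ * (MB * Δ ^ s) = MB * Δ ^ (s + 1) := by ring
    linarith
  · rw [pi_norm_le_iff_of_nonneg (by positivity)]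
    intro i
    have := hw0 i
    simpa [W] using this
end
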